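/- Let f, g ∈ ℝ[x,y,z] be nonconstant polynomials having no common nonconstant factor. Then the set of irreducible real algebraic curves in ℝ³ that are contained simultaneously in the zero set of f and in the zero set of g is finite, of cardinality at most (deg f) · (deg g). -/

import Mathlib

/-!
The bound is a comparison of Hilbert functions.

Let `γ₁, …, γₘ` be distinct irreducible curves on which `f` and `g` vanish, and let `Pᵢ = I(γᵢ)`.
These are prime ideals of transcendence degree one, so no two are comparable
(`curve_eq_of_vanishingIdeal_le`). Hence there are `qᵢ` lying in every `Pⱼ`, `j ≠ i`, but not in
`Pᵢ` (`exists_separating`), and some coordinate `xᵢ` is transcendental modulo `Pᵢ`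
(`exists_transcendental_coord`). The elements `qᵢ xᵢᵏ` are then linearly independent modulo
`⋂ Pᵢ ⊇ (f, g)`, so `ℝ[x, y, z]/(f, g)` has at least `m d - O(1)` dimensions in degree at most `d`.

Since `f` and `g` are coprime, `f u + g v = 0` forces `(u, v)` to be a multiple of `(g, -f)`. With
`N(d) = C(d + 3, 3)` the dimension of the space of polynomials of degree at most `d`, and `a`, `b`
the degrees of `f`, `g`, the elements of the form `f u + g v` with `deg u ≤ d - a` and
`deg v ≤ d - b` leave only
`N(d) - N(d - a) - N(d - b) + N(d - a - b) = a b d + O(1)` dimensions (`finrank_estimate`). Letting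
`d → ∞` gives `m ≤ a b` (`card_le_of_coprime`).
-/

open MvPolynomial

/-- An algebraic set in `Kⁿ`: the common zero locus of a set of polynomials. -/
def IsAlgSet (K : Type) [Field K] (n : ℕ) (V : Set (Fin n → K)) : Prop :=
  ∃ S : Set (MvPolynomial (Fin n) K), V = {x | ∀ p ∈ S, eval x p = 0}

/-- An irreducible algebraic set: nonempty, and not the union of two proper algebraic subsets. -/
def IsIrredAlgSet (K : Type) [Field K] (n : ℕ) (V : Set (Fin n → K)) : Prop :=
  IsAlgSet K n V ∧ V.Nonempty ∧
    ∀ V₁ V₂ : Set (Fin n → K), IsAlgSet K n V₁ → IsAlgSet K n V₂ →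
      V = V₁ ∪ V₂ → V₁ = V ∨ V₂ = V

/-- The vanishing ideal of a set `V ⊆ Kⁿ`. -/
def vanishingIdeal (K : Type) [Field K] (n : ℕ) (V : Set (Fin n → K)) :
    Ideal (MvPolynomial (Fin n) K) where
  carrier := {p | ∀ x ∈ V, eval x p = 0}
  add_mem' := by
    intro a b ha hb x hx
    simp [ha x hx, hb x hx]
  zero_mem' := by
    intro x hx
    simp
  smul_mem' := by
    intro c p hp x hx
    simp [smul_eq_mul, hp x hx]

/-- Transcendence degree of a `K`-algebra `A`: supremum of cardinalities of
algebraically independent subsets. -/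
noncomputable def trdegOver (K A : Type*) [Field K] [CommRing A] [Algebra K A] : Cardinal :=
  ⨆ s : {s : Set A // AlgebraicIndependent K ((↑) : s → A)}, Cardinal.mk s.1

/-- The dimension of an irreducible algebraic set: the transcendence degree over `K`
of its coordinate ring `K[x₁,…,xₙ]/I(V)`. -/
noncomputable def irredAlgSetDim (K : Type) [Field K] (n : ℕ) (V : Set (Fin n → K)) : Cardinal :=
  trdegOver K (MvPolynomial (Fin n) K ⧸ vanishingIdeal K n V)

/-- The dimension of an algebraic set: the maximum of the dimensions of the irreducible
algebraic sets contained in it. -/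
noncomputable def algSetDim (K : Type) [Field K] (n : ℕ) (V : Set (Fin n → K)) : Cardinal :=
  ⨆ W : {W : Set (Fin n → K) // IsIrredAlgSet K n W ∧ W ⊆ V}, irredAlgSetDim K n W.1

/-- An irreducible algebraic curve: an irreducible algebraic set of dimension 1. -/
def IsIrredAlgCurve (K : Type) [Field K] (n : ℕ) (V : Set (Fin n → K)) : Prop :=
  IsIrredAlgSet K n V ∧ irredAlgSetDim K n V = 1

/-- An algebraic curve: an algebraic set of dimension 1. -/
def IsAlgCurve (K : Type) [Field K] (n : ℕ) (V : Set (Fin n → K)) : Prop :=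
  IsAlgSet K n V ∧ algSetDim K n V = 1

/-- The componentwise inclusion `ℝⁿ ↪ ℂⁿ`. -/
def inclC (n : ℕ) (x : Fin n → ℝ) : Fin n → ℂ := fun i => (x i : ℂ)

/-! ### Irreducible curves and their vanishing ideals -/

theorem IsAlgSet.eq_zeros {V : Set (Fin 3 → ℝ)} (hV : IsAlgSet ℝ 3 V) :
    V = {x | ∀ p ∈ vanishingIdeal ℝ 3 V, eval x p = 0} := by
  obtain ⟨S, hS⟩ := hV
  ext x
  constructor
  · intro hx p hp
    exact hp x hx
  · intro hx
    rw [hS]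
    intro p hp
    refine hx p fun y hy => ?_
    rw [hS] at hy
    exact hy p hp

theorem isAlgSet_inter_zeros {V : Set (Fin 3 → ℝ)} (hV : IsAlgSet ℝ 3 V)
    (p : MvPolynomial (Fin 3) ℝ) : IsAlgSet ℝ 3 (V ∩ {x | eval x p = 0}) := by
  obtain ⟨S, rfl⟩ := hV
  refine ⟨insert p S, ?_⟩
  ext x
  simp [and_comm]

theorem isPrime_vanishingIdeal {V : Set (Fin 3 → ℝ)} (hV : IsIrredAlgSet ℝ 3 V) :
    (vanishingIdeal ℝ 3 V).IsPrime := by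
  obtain ⟨hA, ⟨v, hv⟩, hirr⟩ := hV
  refine ⟨?_, ?_⟩
  · rw [Ideal.ne_top_iff_one]
    intro h
    simpa using h v hv
  · intro p q hpq
    rcases hirr _ _ (isAlgSet_inter_zeros hA p) (isAlgSet_inter_zeros hA q) (by
      ext x
      constructor
      · intro hx
        have h := hpq x hx
        rw [map_mul, mul_eq_zero] at h
        exact h.imp (fun h => ⟨hx, h⟩) (fun h => ⟨hx, h⟩)
      · rintro (h | h) <;> exact h.1) with h | h
    · left
      intro x hx
      rw [← h] at hx
      exact hx.2
    · right
      intro x hx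
      rw [← h] at hx
      exact hx.2

theorem trdeg_coordinateRing {V : Set (Fin 3 → ℝ)} (hV : IsIrredAlgCurve ℝ 3 V) :
    Algebra.trdeg ℝ (MvPolynomial (Fin 3) ℝ ⧸ vanishingIdeal ℝ 3 V) = 1 :=
  hV.2

/-- Some coordinate function is transcendental on an irreducible curve: otherwise the whole
coordinate ring, which the coordinates generate, would be algebraic over `ℝ`. -/
theorem exists_transcendental_coord {V : Set (Fin 3 → ℝ)} (hV : IsIrredAlgCurve ℝ 3 V) :
    ∃ t : Fin 3, ∀ p : Polynomial ℝ,
      Polynomial.aeval (X t : MvPolynomial (Fin 3) ℝ) p ∈ vanishingIdeal ℝ 3 V → p = 0 := by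
  have htr := trdeg_coordinateRing hV
  have := isPrime_vanishingIdeal hV.1
  set P := vanishingIdeal ℝ 3 V
  by_contra! hcon
  have halg : Algebra.IsAlgebraic ℝ (MvPolynomial (Fin 3) ℝ ⧸ P) := by
    refine ⟨fun a => ?_⟩
    obtain ⟨a, rfl⟩ := Ideal.Quotient.mk_surjective a
    induction a using MvPolynomial.induction_on with
    | C r => exact isAlgebraic_algebraMap (A := MvPolynomial (Fin 3) ℝ ⧸ P) r
    | add p q hp hq => rw [map_add]; exact hp.add hq
    | mul_X p t hp =>
      rw [map_mul]
      refine hp.mul ?_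
      obtain ⟨q, hq, hq0⟩ := hcon t
      refine ⟨q, hq0, ?_⟩
      have h := Polynomial.aeval_algHom_apply (Ideal.Quotient.mkₐ ℝ P) (X t) q
      rw [Ideal.Quotient.mkₐ_eq_mk] at h
      rw [h]
      exact Ideal.Quotient.eq_zero_iff_mem.mpr hq
  exact one_ne_zero (htr.symm.trans trdeg_eq_zero)

/-- There are no strict inclusions between the vanishing ideals of irreducible curves. If
`a ∈ I(W) \ I(V)`, then in the coordinate ring of `V`, which is algebraic over `ℝ[x]` for a
coordinate `x` transcendental on `W`, the class of `a` divides a nonzero polynomial in `x`; this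
polynomial in `x` then vanishes on `W`. -/
theorem curve_eq_of_vanishingIdeal_le {V W : Set (Fin 3 → ℝ)} (hV : IsIrredAlgCurve ℝ 3 V)
    (hW : IsIrredAlgCurve ℝ 3 W) (hle : vanishingIdeal ℝ 3 V ≤ vanishingIdeal ℝ 3 W) :
    V = W := by
  suffices hge : vanishingIdeal ℝ 3 W ≤ vanishingIdeal ℝ 3 V by
    rw [hV.1.1.eq_zeros, hW.1.1.eq_zeros, le_antisymm hle hge]
  intro a haW
  by_contra haV
  have htr := trdeg_coordinateRing hV
  have := isPrime_vanishingIdeal hV.1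
  obtain ⟨t, ht⟩ := exists_transcendental_coord hW
  set P := vanishingIdeal ℝ 3 V
  have haeval : ∀ q : Polynomial ℝ, Polynomial.aeval (Ideal.Quotient.mk P (X t)) q =
      Ideal.Quotient.mk P (Polynomial.aeval (X t) q) := by
    intro q
    have h := Polynomial.aeval_algHom_apply (Ideal.Quotient.mkₐ ℝ P) (X t) q
    rwa [Ideal.Quotient.mkₐ_eq_mk] at h
  have hx : AlgebraicIndependent ℝ (fun _ : Unit => Ideal.Quotient.mk P (X t)) := by
    rw [algebraicIndependent_unique_type_iff]
    rintro ⟨q, hq, hq0⟩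
    rw [haeval, Ideal.Quotient.eq_zero_iff_mem] at hq0
    exact hq (ht q (hle hq0))
  have hbasis := hx.isTranscendenceBasis_of_trdeg_le_of_finite (by simp [htr])
  have halg := hbasis.isAlgebraic.isAlgebraic (Ideal.Quotient.mk P a)
  obtain ⟨⟨r, hr⟩, hr0, s, hs⟩ := halg.exists_nonzero_dvd
    (mem_nonZeroDivisors_of_ne_zero (by rwa [Ne, Ideal.Quotient.eq_zero_iff_mem]))
  rw [Set.range_const, Algebra.adjoin_singleton_eq_range_aeval] at hr
  obtain ⟨q, rfl⟩ := hr
  obtain ⟨s, rfl⟩ := Ideal.Quotient.mk_surjective s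
  have hs' : Ideal.Quotient.mk P (Polynomial.aeval (X t) q) = Ideal.Quotient.mk P (a * s) := by
    rw [map_mul, ← hs, ← haeval]
    rfl
  rw [Ideal.Quotient.eq] at hs'
  have hq : q = 0 := ht q (by
    have := Ideal.add_mem _ (hle hs') (Ideal.mul_mem_right s _ haW)
    simpa using this)
  subst hq
  exact hr0 (Subtype.ext (by simp))

/-! ### Dimension counts -/

theorem six_mul_finrank_restrictTotalDegree (d : ℕ) :
    6 * Module.finrank ℝ (restrictTotalDegree (Fin 3) ℝ d) = (d + 1) * (d + 2) * (d + 3) := by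
  have hset : {n : Fin 3 →₀ ℕ | (n.sum fun _ e => e) ≤ d} =
      ((Finset.range (d + 1)).biUnion fun k => Finset.finsuppAntidiag Finset.univ k :
        Finset (Fin 3 →₀ ℕ)) := by
    ext n
    have h : (n.sum fun _ e => e) = Finset.univ.sum n := Finsupp.sum_fintype _ _ fun _ => rfl
    simp [h]
  have hcard : Module.finrank ℝ (restrictTotalDegree (Fin 3) ℝ d) =
      ∑ k ∈ Finset.range (d + 1), (k + 2).choose 2 := by
    rw [restrictTotalDegree, Module.finrank_eq_nat_card_basis (basisRestrictSupport ℝ _), hset]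
    rw [Nat.card_coe_set_eq, Set.ncard_coe_finset, Finset.card_biUnion]
    · refine Finset.sum_congr rfl fun k _ => ?_
      rw [Finset.card_finsuppAntidiag_nat_eq_choose, Finset.card_univ, Fintype.card_fin,
        ← Nat.choose_symm_add]
      congr 1
      omega
    · intro i _ j _ hij
      rw [Function.onFun, Finset.disjoint_left]
      intro n hi hj
      rw [Finset.mem_finsuppAntidiag] at hi hj
      exact hij (hi.1.symm.trans hj.1)
  rw [hcard]
  clear hcard hset
  induction d with
  | zero => simp
  | succ d ih =>
    rw [Finset.sum_range_succ, mul_add, ih]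
    have h : 2 * (d + 1 + 2).choose 2 = (d + 3) * (d + 2) := by
      rw [Nat.choose_two_right, Nat.mul_div_cancel']
      · rfl
      · exact (Nat.even_mul_pred_self _).two_dvd
    linarith [congrArg (fun n => 3 * n) h, show (d + 1) * (d + 2) * (d + 3) + 3 * ((d + 3) * (d + 2))
      = (d + 1 + 1) * (d + 1 + 2) * (d + 1 + 3) by ring]

theorem totalDegree_aeval_X_le {k : ℕ} (t : Fin 3) {p : Polynomial ℝ}
    (hp : p ∈ Polynomial.degreeLT ℝ (k + 1)) :
    (Polynomial.aeval (X t : MvPolynomial (Fin 3) ℝ) p).totalDegree ≤ k := by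
  rw [Polynomial.mem_degreeLT] at hp
  rw [Polynomial.aeval_eq_sum_range]
  refine totalDegree_finsetSum_le fun i hi => ?_
  refine (totalDegree_smul_le _ _).trans ?_
  rw [totalDegree_X_pow]
  have h2 : p.natDegree < k + 1 := by
    rcases eq_or_ne p 0 with rfl | hp0
    · simp
    · exact (Polynomial.natDegree_lt_iff_degree_lt hp0).mpr hp
  rw [Finset.mem_range] at hi
  omega

/-- Prime ideals without inclusions between them are separated by elements `q i` lying in every
`P j` with `j ≠ i` but not in `P i`. -/
theorem exists_separating {ι : Type*} [Fintype ι] (P : ι → Ideal (MvPolynomial (Fin 3) ℝ))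
    (hP : ∀ i, (P i).IsPrime) (hinc : ∀ i j, P i ≤ P j → i = j) :
    ∃ q : ι → MvPolynomial (Fin 3) ℝ, ∀ i, q i ∉ P i ∧ ∀ j, j ≠ i → q i ∈ P j := by
  classical
  have h : ∀ i j, ∃ a : MvPolynomial (Fin 3) ℝ, j ≠ i → a ∈ P j ∧ a ∉ P i := by
    intro i j
    by_cases hij : j = i
    · exact ⟨0, fun h => (h hij).elim⟩
    · obtain ⟨a, ha⟩ := SetLike.not_le_iff_exists.mp fun hle => hij (hinc j i hle)
      exact ⟨a, fun _ => ha⟩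
  choose a ha using h
  refine ⟨fun i => ∏ j ∈ Finset.univ.erase i, a i j, fun i => ⟨fun hmem => ?_, fun j hj => ?_⟩⟩
  · obtain ⟨j, hj, hj'⟩ := ((hP i).prod_mem_iff).mp hmem
    exact (ha i j (Finset.ne_of_mem_erase hj)).2 hj'
  · exact Ideal.mem_of_dvd _ (Finset.dvd_prod_of_mem _ (Finset.mem_erase.mpr ⟨hj, Finset.mem_univ _⟩))
      (ha i j hj).1

/-- The Hilbert function estimate. Let `q i` have degree at most `e`, and count dimensions for the
map `(u, v, p) ↦ f u + g v + ∑ i, q i * p i (x_{t i})` into the polynomials of degree at most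
`deg f + deg g + e + s`. In its kernel `p = 0`, by reduction modulo each `P i`, and then
coprimality makes `(u, v)` a multiple of `(g, -f)`. -/
theorem finrank_estimate {ι : Type*} [Fintype ι] (f g : MvPolynomial (Fin 3) ℝ)
    (hg : g ≠ 0) (hrel : IsRelPrime f g)
    (P : ι → Ideal (MvPolynomial (Fin 3) ℝ)) (hP : ∀ i, (P i).IsPrime)
    (hfP : ∀ i, f ∈ P i) (hgP : ∀ i, g ∈ P i)
    (t : ι → Fin 3)
    (ht : ∀ i, ∀ p : Polynomial ℝ,
      Polynomial.aeval (X (t i) : MvPolynomial (Fin 3) ℝ) p ∈ P i → p = 0)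
    (q : ι → MvPolynomial (Fin 3) ℝ) (hq : ∀ i, q i ∉ P i ∧ ∀ j, j ≠ i → q i ∈ P j)
    (e : ℕ) (he : ∀ i, (q i).totalDegree ≤ e) (s : ℕ) :
    Module.finrank ℝ (restrictTotalDegree (Fin 3) ℝ (s + e + g.totalDegree)) +
      Module.finrank ℝ (restrictTotalDegree (Fin 3) ℝ (s + e + f.totalDegree)) +
      Fintype.card ι * (s + f.totalDegree + g.totalDegree + 1) ≤
    Module.finrank ℝ (restrictTotalDegree (Fin 3) ℝ (s + e + f.totalDegree + g.totalDegree)) +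
      Module.finrank ℝ (restrictTotalDegree (Fin 3) ℝ (s + e)) := by
  classical
  set a := f.totalDegree with ha
  set b := g.totalDegree with hb
  let U := restrictTotalDegree (Fin 3) ℝ (s + e + b)
  let V := restrictTotalDegree (Fin 3) ℝ (s + e + a)
  let L := Polynomial.degreeLT ℝ (s + a + b + 1)
  let Q : (ι → L) →ₗ[ℝ] MvPolynomial (Fin 3) ℝ := ∑ i, (LinearMap.mulLeft ℝ (q i)) ∘ₗ
    (Polynomial.aeval (X (t i) : MvPolynomial (Fin 3) ℝ)).toLinearMap ∘ₗ
      L.subtype ∘ₗ LinearMap.proj i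
  let Ψ : ((U × V) × (ι → L)) →ₗ[ℝ] MvPolynomial (Fin 3) ℝ :=
    ((LinearMap.mulLeft ℝ f ∘ₗ U.subtype).coprod (LinearMap.mulLeft ℝ g ∘ₗ V.subtype)).coprod Q
  have hΨ : ∀ u v c, Ψ ((u, v), c) =
      f * u.1 + g * v.1 + ∑ i, q i * Polynomial.aeval (X (t i) : MvPolynomial (Fin 3) ℝ) (c i).1 := by
    intro u v c
    simp [Ψ, Q]
  let S := restrictTotalDegree (Fin 3) ℝ (s + e)
  have hS1 : ∀ w : S, (g * w.1) ∈ U := by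
    intro w
    have := (mem_restrictTotalDegree _ _ _).mp w.2
    have h2 := totalDegree_mul g w.1
    exact (mem_restrictTotalDegree _ _ _).mpr (by omega)
  have hS2 : ∀ w : S, (-f * w.1) ∈ V := by
    intro w
    have := (mem_restrictTotalDegree _ _ _).mp w.2
    have h2 := totalDegree_mul (-f) w.1
    rw [totalDegree_neg] at h2
    exact (mem_restrictTotalDegree _ _ _).mpr (by omega)
  let Φ : S →ₗ[ℝ] ((U × V) × (ι → L)) :=
    (((LinearMap.mulLeft ℝ g ∘ₗ S.subtype).codRestrict U hS1).prod
      ((LinearMap.mulLeft ℝ (-f) ∘ₗ S.subtype).codRestrict V hS2)).prod 0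
  have hker : LinearMap.ker Ψ ≤ LinearMap.range Φ := by
    rintro ⟨⟨u, v⟩, c⟩ hmem
    rw [LinearMap.mem_ker, hΨ] at hmem
    have hc : c = 0 := by
      funext i
      have h1 : q i * Polynomial.aeval (X (t i) : MvPolynomial (Fin 3) ℝ) (c i).1 ∈ P i := by
        rw [← Finset.add_sum_erase _ _ (Finset.mem_univ i)] at hmem
        have h2 : f * u.1 + g * v.1 + ∑ j ∈ Finset.univ.erase i,
            q j * Polynomial.aeval (X (t j) : MvPolynomial (Fin 3) ℝ) (c j).1 ∈ P i :=
          Ideal.add_mem _ (Ideal.add_mem _ (Ideal.mul_mem_right _ _ (hfP i))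
            (Ideal.mul_mem_right _ _ (hgP i)))
            (Ideal.sum_mem _ fun j hj => Ideal.mul_mem_right _ _
              ((hq j).2 i (Finset.ne_of_mem_erase hj).symm))
        rw [show q i * Polynomial.aeval (X (t i) : MvPolynomial (Fin 3) ℝ) (c i).1 = -(f * u.1 + g * v.1 +
          ∑ j ∈ Finset.univ.erase i, q j * Polynomial.aeval (X (t j) : MvPolynomial (Fin 3) ℝ) (c j).1) by
            linear_combination hmem]
        exact (Ideal.neg_mem_iff _).mpr h2
      exact Subtype.ext (ht i _ (((hP i).mem_or_mem h1).resolve_left (hq i).1))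
    subst hc
    have h0 : f * u.1 + g * v.1 = 0 := by simpa using hmem
    have hdvd : g ∣ u.1 := by
      exact hrel.symm.dvd_of_dvd_mul_left ⟨-v.1, by linear_combination h0⟩
    obtain ⟨w, hw⟩ := hdvd
    have hv : v.1 = -f * w := by
      rw [hw] at h0
      exact mul_left_cancel₀ hg (by linear_combination h0)
    have hwS : w ∈ S := by
      rw [mem_restrictTotalDegree]
      rcases eq_or_ne w 0 with rfl | hw0
      · simp
      · have hu := (mem_restrictTotalDegree _ _ _).mp u.2
        rw [hw, totalDegree_mul_of_isDomain hg hw0] at hu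
        omega
    refine ⟨⟨w, hwS⟩, ?_⟩
    refine Prod.ext (Prod.ext (Subtype.ext ?_) (Subtype.ext ?_)) rfl
    · exact hw.symm
    · exact hv.symm
  let W := restrictTotalDegree (Fin 3) ℝ (s + e + a + b)
  have hrange : LinearMap.range Ψ ≤ W := by
    rintro _ ⟨⟨⟨u, v⟩, c⟩, rfl⟩
    rw [hΨ]
    refine Submodule.add_mem _ (Submodule.add_mem _ ?_ ?_) (Submodule.sum_mem _ fun i _ => ?_)
    all_goals rw [mem_restrictTotalDegree]
    · have := (mem_restrictTotalDegree _ _ _).mp u.2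
      have h2 := totalDegree_mul f u.1
      omega
    · have := (mem_restrictTotalDegree _ _ _).mp v.2
      have h2 := totalDegree_mul g v.1
      omega
    · have := totalDegree_aeval_X_le (t i) (c i).2
      have h2 := totalDegree_mul (q i) (Polynomial.aeval (X (t i) : MvPolynomial (Fin 3) ℝ) (c i).1)
      have h3 := he i
      omega
  have : Module.Finite ℝ L := Module.Finite.equiv (Polynomial.degreeLTEquiv ℝ _).symm
  have hL : Module.finrank ℝ L = s + a + b + 1 := by
    rw [(Polynomial.degreeLTEquiv ℝ _).finrank_eq]
    simp
  have hrn := LinearMap.finrank_range_add_finrank_ker Ψ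
  rw [Module.finrank_prod, Module.finrank_prod, Module.finrank_pi_fintype] at hrn
  simp only [hL, Finset.sum_const, Finset.card_univ, smul_eq_mul] at hrn
  have h1 := Submodule.finrank_mono hrange
  have h2 := (Submodule.finrank_mono hker).trans (LinearMap.finrank_range_le Φ)
  change Module.finrank ℝ U + Module.finrank ℝ V + _ ≤
    Module.finrank ℝ W + Module.finrank ℝ S
  omega

/-- The estimate above, with `s` large: the left side grows like `card ι * s` and the second
difference of `C(d + 3, 3)` like `deg f * deg g * s`. -/
theorem card_le_of_coprime {ι : Type*} [Fintype ι] (f g : MvPolynomial (Fin 3) ℝ)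
    (hg : g ≠ 0) (hrel : IsRelPrime f g)
    (P : ι → Ideal (MvPolynomial (Fin 3) ℝ)) (hP : ∀ i, (P i).IsPrime)
    (hinc : ∀ i j, P i ≤ P j → i = j)
    (hfP : ∀ i, f ∈ P i) (hgP : ∀ i, g ∈ P i)
    (ht : ∀ i, ∃ t : Fin 3, ∀ p : Polynomial ℝ,
      Polynomial.aeval (X t : MvPolynomial (Fin 3) ℝ) p ∈ P i → p = 0) :
    Fintype.card ι ≤ f.totalDegree * g.totalDegree := by
  choose t ht using ht
  obtain ⟨q, hq⟩ := exists_separating P hP hinc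
  let e := Finset.univ.sup fun i => (q i).totalDegree
  have he : ∀ i, (q i).totalDegree ≤ e := fun i =>
    Finset.le_sup (f := fun i => (q i).totalDegree) (Finset.mem_univ i)
  have hest := finrank_estimate f g hg hrel P hP hfP hgP t ht q hq e he
  generalize e = e at hest
  generalize f.totalDegree = a at *
  generalize g.totalDegree = b at *
  generalize Fintype.card ι = m at *
  by_contra! hm
  -- With the values of the dimensions inserted, `hest` becomes
  -- `2 m (s + a + b + 1) ≤ a b (2 s + 2 e + a + b + 4)`, which fails for this `s` if `m > a b`.
  have h := hest (a * b * (e + a + b + 4))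
  generalize hs : a * b * (e + a + b + 4) = s at h
  have h1 := six_mul_finrank_restrictTotalDegree (s + e + b)
  have h2 := six_mul_finrank_restrictTotalDegree (s + e + a)
  have h3 := six_mul_finrank_restrictTotalDegree (s + e + a + b)
  have h4 := six_mul_finrank_restrictTotalDegree (s + e)
  have key : 2 * (m * (s + a + b + 1)) ≤ a * b * (2 * s + 2 * e + a + b + 4) := by
    zify at *
    linarith
  have hm' : (a * b + 1) * (s + a + b + 1) ≤ m * (s + a + b + 1) := Nat.mul_le_mul_right _ hm
  zify at *
  nlinarith [mul_nonneg (mul_nonneg (Int.natCast_nonneg a) (Int.natCast_nonneg b))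
    (Int.natCast_nonneg (a + b))]

/-! ### The bound for curves -/

/-- If `f, g ∈ ℝ[x,y,z]` are nonconstant with no common nonconstant factor, then at
most `deg f · deg g` irreducible real algebraic curves lie simultaneously in the zero
sets of `f` and `g`. -/
theorem common_curves_of_coprime_real_polynomials
    (f g : MvPolynomial (Fin 3) ℝ)
    (hf : f.totalDegree ≠ 0) (hg : g.totalDegree ≠ 0)
    (hcop : ¬ ∃ h : MvPolynomial (Fin 3) ℝ, h.totalDegree ≠ 0 ∧ h ∣ f ∧ h ∣ g) :
    {γ : Set (Fin 3 → ℝ) | IsIrredAlgCurve ℝ 3 γ ∧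
        γ ⊆ {x | eval x f = 0} ∧ γ ⊆ {x | eval x g = 0}}.Finite ∧
      {γ : Set (Fin 3 → ℝ) | IsIrredAlgCurve ℝ 3 γ ∧
        γ ⊆ {x | eval x f = 0} ∧ γ ⊆ {x | eval x g = 0}}.ncard ≤
          f.totalDegree * g.totalDegree := by
  have hf0 : f ≠ 0 := by rintro rfl; simp at hf
  have hg0 : g ≠ 0 := by rintro rfl; simp at hg
  have hrel : IsRelPrime f g := by
    intro h h1 h2
    by_contra hu
    refine hcop ⟨h, fun hdeg => hu ?_, h1, h2⟩
    rw [totalDegree_eq_zero_iff_eq_C] at hdeg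
    have hc : coeff 0 h ≠ 0 := by
      intro hc
      rw [hc, C_0] at hdeg
      exact hf0 (zero_dvd_iff.mp (hdeg ▸ h1))
    rw [hdeg]
    exact (IsUnit.mk0 _ hc).map C
  set 𝒞 := {γ : Set (Fin 3 → ℝ) | IsIrredAlgCurve ℝ 3 γ ∧
        γ ⊆ {x | eval x f = 0} ∧ γ ⊆ {x | eval x g = 0}}
  have hbound : ∀ T : Finset (Set (Fin 3 → ℝ)), (T : Set (Set (Fin 3 → ℝ))) ⊆ 𝒞 →
      T.card ≤ f.totalDegree * g.totalDegree := by
    intro T hT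
    rw [← Fintype.card_coe]
    refine card_le_of_coprime f g hg0 hrel (fun γ : T => vanishingIdeal ℝ 3 γ.1)
      (fun γ => isPrime_vanishingIdeal (hT γ.2).1.1)
      (fun γ δ h => Subtype.ext (curve_eq_of_vanishingIdeal_le (hT γ.2).1 (hT δ.2).1 h))
      (fun γ x hx => (hT γ.2).2.1 hx) (fun γ x hx => (hT γ.2).2.2 hx)
      (fun γ => exists_transcendental_coord (hT γ.2).1)
  have hfin : 𝒞.Finite := by
    by_contra hinf
    obtain ⟨T, hT, hcard⟩ :=
      Set.Infinite.exists_subset_card_eq hinf (f.totalDegree * g.totalDegree + 1)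
    have := hbound T hT
    omega
  refine ⟨hfin, ?_⟩
  rw [Set.ncard_eq_toFinset_card _ hfin]
  exact hbound _ (by simp)
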